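/- Let J = 2, 0 < d_i < ρ < u_i for i = 1,2, and suppose κ = 1 − (ρ−d₁)/(u₁−d₁) − (ρ−d₂)/(u₂−d₂) = 0. Then for any convex sub-modular f : ℝ_+² → ℝ and any n ≥ 1, the n-step hedge price ρ^{−n}𝓑^n f(S₀¹,S₀²), where 𝓑 is the reduced Bellman operator, equals ρ^{−n} Σ_{k=0}^n C(n,k) ((ρ−d₁)/(u₁−d₁))^k ((ρ−d₂)/(u₂−d₂))^{n−k} f(u₁^k d₁^{n−k} S₀¹, d₂^k u₂^{n−k} S₀²), where C(n,k) is the binomial coefficient; equivalently, with q₁ = (ρ−d₁)/(u₁−d₁) and q₂ = (ρ−d₂)/(u₂−d₂) satisfying q₁ + q₂ = 1, the hedge price is the discounted binomial expectation of f where stock 1 moves up exactly when stock 2 moves down. -/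

import Mathlib

noncomputable section

/-- The reduced Bellman operator for the two-stock model:
`(𝓑f)(z₁,z₂) = min_γ max_{ξᵢ∈[dᵢ,uᵢ]} [f(ξ₁z₁,ξ₂z₂) − Σᵢ γ^i zᵢ(ξᵢ − ρ)]`. -/
def Bop2 (ρ d₁ d₂ u₁ u₂ : ℝ) (f : ℝ × ℝ → ℝ) : ℝ × ℝ → ℝ :=
  fun z => ⨅ γ : ℝ × ℝ,
    ⨆ ξ : { ξ : ℝ × ℝ // ξ.1 ∈ Set.Icc d₁ u₁ ∧ ξ.2 ∈ Set.Icc d₂ u₂ },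
      (f (ξ.1.1 * z.1, ξ.1.2 * z.2) - γ.1 * z.1 * (ξ.1.1 - ρ) - γ.2 * z.2 * (ξ.1.2 - ρ))

/-- Convexity and sub-modularity on the open positive quadrant. -/
def GoodF (f : ℝ × ℝ → ℝ) : Prop :=
  ConvexOn ℝ (Set.Ioi (0 : ℝ) ×ˢ Set.Ioi (0 : ℝ)) f ∧
  ∀ x₁ y₁ x₂ y₂ : ℝ, 0 < x₁ → x₁ ≤ y₁ → 0 < x₂ → x₂ ≤ y₂ →
      f (x₁, x₂) + f (y₁, y₂) ≤ f (x₁, y₂) + f (y₁, x₂)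

lemma GoodF.cv {f : ℝ × ℝ → ℝ} (hf : GoodF f) (p r : ℝ × ℝ) (hp : 0 < p.1 ∧ 0 < p.2)
    (hr : 0 < r.1 ∧ 0 < r.2) (s t : ℝ) (hs : 0 ≤ s) (ht : 0 ≤ t) (hst : s + t = 1) :
    f (s • p + t • r) ≤ s • f p + t • f r :=
  hf.1.2 hp hr hs ht hst

lemma corner_bound {f : ℝ × ℝ → ℝ} (hf : GoodF f) {a b c e s t : ℝ} (ha : 0 < a) (hb : 0 < b)
    (hc : 0 < c) (he : 0 < e) (hs0 : 0 ≤ s) (hs1 : s ≤ 1) (ht0 : 0 ≤ t) (ht1 : t ≤ 1) :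
    f ((1 - s) * a + s * b, (1 - t) * c + t * e) ≤
      (1 - s) * ((1 - t) * f (a, c) + t * f (a, e)) +
        s * ((1 - t) * f (b, c) + t * f (b, e)) := by
  have key : ∀ x : ℝ, 0 < x → f (x, (1 - t) * c + t * e) ≤ (1 - t) * f (x, c) + t * f (x, e) := by
    intro x hx
    have := hf.cv (x, c) (x, e) ⟨hx, hc⟩ ⟨hx, he⟩
      (1 - t) t (by linarith) ht0 (by ring)
    have h2 : (1 - t) • ((x, c) : ℝ × ℝ) + t • ((x, e) : ℝ × ℝ) = (x, (1 - t) * c + t * e) := by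
      ext <;> simp
      ring
    rw [h2] at this
    simpa using this
  have hy : 0 < (1 - t) * c + t * e := by
    rcases lt_or_eq_of_le ht1 with h | h
    · have : 0 < 1 - t := by linarith
      positivity
    · subst h; simpa using he
  have := hf.cv (a, (1 - t) * c + t * e) (b, (1 - t) * c + t * e) ⟨ha, hy⟩ ⟨hb, hy⟩
      (1 - s) s (by linarith) hs0 (by ring)
  have h2 : (1 - s) • ((a, (1 - t) * c + t * e) : ℝ × ℝ) + s • ((b, (1 - t) * c + t * e) : ℝ × ℝ)
      = ((1 - s) * a + s * b, (1 - t) * c + t * e) := by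
    ext <;> simp
    ring
  rw [h2] at this
  simp only [smul_eq_mul] at this
  have k1 := mul_le_mul_of_nonneg_left (key a ha) (by linarith : 0 ≤ 1 - s)
  have k2 := mul_le_mul_of_nonneg_left (key b hb) hs0
  linarith

lemma Bop2_eq (ρ d₁ d₂ u₁ u₂ : ℝ)
    (hd₁ : 0 < d₁) (hd₂ : 0 < d₂) (h₁ : d₁ < ρ) (h₂ : d₂ < ρ)
    (h₃ : ρ < u₁) (h₄ : ρ < u₂)
    (hκ : 1 - (ρ - d₁) / (u₁ - d₁) - (ρ - d₂) / (u₂ - d₂) = 0)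
    (f : ℝ × ℝ → ℝ) (hf : GoodF f) (z₁ z₂ : ℝ) (hz₁ : 0 < z₁) (hz₂ : 0 < z₂) :
    Bop2 ρ d₁ d₂ u₁ u₂ f (z₁, z₂) =
      (ρ - d₁) / (u₁ - d₁) * f (u₁ * z₁, d₂ * z₂) +
      (ρ - d₂) / (u₂ - d₂) * f (d₁ * z₁, u₂ * z₂) := by
  have e1 : 0 < u₁ - d₁ := by linarith
  have e2 : 0 < u₂ - d₂ := by linarith
  have hu₁ : 0 < u₁ := by linarith
  have hu₂ : 0 < u₂ := by linarith
  have hr1 : (ρ - d₁) / (u₁ - d₁) * (u₁ - d₁) = ρ - d₁ := by field_simp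
  have hr2 : (ρ - d₂) / (u₂ - d₂) * (u₂ - d₂) = ρ - d₂ := by field_simp
  have hq1 : 0 ≤ (ρ - d₁) / (u₁ - d₁) := div_nonneg (by linarith) e1.le
  have hq2 : 0 ≤ (ρ - d₂) / (u₂ - d₂) := div_nonneg (by linarith) e2.le
  set q₁ := (ρ - d₁) / (u₁ - d₁)
  set q₂ := (ρ - d₂) / (u₂ - d₂)
  have hsub := hf.2 (d₁ * z₁) (u₁ * z₁) (d₂ * z₂) (u₂ * z₂) (by positivity)
    (by gcongr; linarith) (by positivity) (by gcongr; linarith)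
  -- upper bound on the box
  have box : ∀ ξ : { ξ : ℝ × ℝ // ξ.1 ∈ Set.Icc d₁ u₁ ∧ ξ.2 ∈ Set.Icc d₂ u₂ },
      f (ξ.1.1 * z₁, ξ.1.2 * z₂) ≤ f (d₁ * z₁, d₂ * z₂)
        + (ξ.1.1 - d₁) / (u₁ - d₁) * (f (u₁ * z₁, d₂ * z₂) - f (d₁ * z₁, d₂ * z₂))
        + (ξ.1.2 - d₂) / (u₂ - d₂) * (f (d₁ * z₁, u₂ * z₂) - f (d₁ * z₁, d₂ * z₂)) := by
    rintro ⟨⟨x, y⟩, ⟨hx1, hx2⟩, ⟨hy1, hy2⟩⟩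
    dsimp only at *
    have hs0 : 0 ≤ (x - d₁) / (u₁ - d₁) := div_nonneg (by linarith) e1.le
    have ht0 : 0 ≤ (y - d₂) / (u₂ - d₂) := div_nonneg (by linarith) e2.le
    have hs1 : (x - d₁) / (u₁ - d₁) ≤ 1 := (div_le_one e1).2 (by linarith)
    have ht1 : (y - d₂) / (u₂ - d₂) ≤ 1 := (div_le_one e2).2 (by linarith)
    have hxs : (x - d₁) / (u₁ - d₁) * (u₁ - d₁) = x - d₁ := by field_simp
    have hyt : (y - d₂) / (u₂ - d₂) * (u₂ - d₂) = y - d₂ := by field_simp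
    set s := (x - d₁) / (u₁ - d₁)
    set t := (y - d₂) / (u₂ - d₂)
    have hc := corner_bound hf (a := d₁ * z₁) (b := u₁ * z₁) (c := d₂ * z₂) (e := u₂ * z₂)
      (by positivity) (by positivity) (by positivity) (by positivity) hs0 hs1 ht0 ht1
    have ex : (1 - s) * (d₁ * z₁) + s * (u₁ * z₁) = x * z₁ := by linear_combination z₁ * hxs
    have ey : (1 - t) * (d₂ * z₂) + t * (u₂ * z₂) = y * z₂ := by linear_combination z₂ * hyt
    rw [ex, ey] at hc
    have := mul_le_mul_of_nonneg_left hsub (mul_nonneg hs0 ht0)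
    linarith
  have bdd : ∀ γ : ℝ × ℝ, BddAbove (Set.range
      fun ξ : { ξ : ℝ × ℝ // ξ.1 ∈ Set.Icc d₁ u₁ ∧ ξ.2 ∈ Set.Icc d₂ u₂ } =>
      (f (ξ.1.1 * z₁, ξ.1.2 * z₂) - γ.1 * z₁ * (ξ.1.1 - ρ) - γ.2 * z₂ * (ξ.1.2 - ρ))) := by
    intro γ
    have hcpt : IsCompact (Set.Icc d₁ u₁ ×ˢ Set.Icc d₂ u₂) := isCompact_Icc.prod isCompact_Icc
    obtain ⟨M, hM⟩ := hcpt.bddAbove_image (f := fun ξ : ℝ × ℝ => f (d₁ * z₁, d₂ * z₂)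
        + (ξ.1 - d₁) / (u₁ - d₁) * (f (u₁ * z₁, d₂ * z₂) - f (d₁ * z₁, d₂ * z₂))
        + (ξ.2 - d₂) / (u₂ - d₂) * (f (d₁ * z₁, u₂ * z₂) - f (d₁ * z₁, d₂ * z₂))
        - γ.1 * z₁ * (ξ.1 - ρ) - γ.2 * z₂ * (ξ.2 - ρ)) (by
          apply Continuous.continuousOn
          fun_prop)
    refine ⟨M, ?_⟩
    rintro _ ⟨ξ, rfl⟩
    have := hM ⟨ξ.1, ⟨ξ.2.1, ξ.2.2⟩, rfl⟩
    have := box ξ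
    dsimp only at *
    linarith
  have lower : ∀ γ : ℝ × ℝ, q₁ * f (u₁ * z₁, d₂ * z₂) + q₂ * f (d₁ * z₁, u₂ * z₂) ≤
      ⨆ ξ : { ξ : ℝ × ℝ // ξ.1 ∈ Set.Icc d₁ u₁ ∧ ξ.2 ∈ Set.Icc d₂ u₂ },
      (f (ξ.1.1 * z₁, ξ.1.2 * z₂) - γ.1 * z₁ * (ξ.1.1 - ρ) - γ.2 * z₂ * (ξ.1.2 - ρ)) := by
    intro γ
    have k1 := le_ciSup (bdd γ) ⟨(u₁, d₂), ⟨⟨by linarith, le_rfl⟩, ⟨le_rfl, by linarith⟩⟩⟩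
    have k2 := le_ciSup (bdd γ) ⟨(d₁, u₂), ⟨⟨le_rfl, by linarith⟩, ⟨by linarith, le_rfl⟩⟩⟩
    dsimp only at k1 k2
    set M := ⨆ ξ : { ξ : ℝ × ℝ // ξ.1 ∈ Set.Icc d₁ u₁ ∧ ξ.2 ∈ Set.Icc d₂ u₂ },
      (f (ξ.1.1 * z₁, ξ.1.2 * z₂) - γ.1 * z₁ * (ξ.1.1 - ρ) - γ.2 * z₂ * (ξ.1.2 - ρ))
    have m1 := mul_le_mul_of_nonneg_left k1 hq1
    have m2 := mul_le_mul_of_nonneg_left k2 hq2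
    have hq : q₂ = 1 - q₁ := by linarith
    have z1 : q₁ * (γ.1 * z₁ * (u₁ - ρ)) + q₂ * (γ.1 * z₁ * (d₁ - ρ)) = 0 := by
      rw [hq]; linear_combination γ.1 * z₁ * hr1
    have z2 : q₁ * (γ.2 * z₂ * (d₂ - ρ)) + q₂ * (γ.2 * z₂ * (u₂ - ρ)) = 0 := by
      have hq' : q₁ = 1 - q₂ := by linarith
      rw [hq']; linear_combination γ.2 * z₂ * hr2
    have z3 : q₁ * M + q₂ * M = M := by rw [hq]; ring
    linarith
  unfold Bop2
  dsimp only
  apply le_antisymm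
  · refine ciInf_le_of_le ⟨_, by rintro _ ⟨γ, rfl⟩; exact lower γ⟩
      ((f (u₁ * z₁, d₂ * z₂) - f (d₁ * z₁, d₂ * z₂)) / (z₁ * (u₁ - d₁)),
       (f (d₁ * z₁, u₂ * z₂) - f (d₁ * z₁, d₂ * z₂)) / (z₂ * (u₂ - d₂))) ?_
    have : Nonempty { ξ : ℝ × ℝ // ξ.1 ∈ Set.Icc d₁ u₁ ∧ ξ.2 ∈ Set.Icc d₂ u₂ } :=
      ⟨⟨(u₁, d₂), ⟨⟨by linarith, le_rfl⟩, ⟨le_rfl, by linarith⟩⟩⟩⟩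
    apply ciSup_le
    intro ξ
    have hb := box ξ
    dsimp only
    have g1 : (f (u₁ * z₁, d₂ * z₂) - f (d₁ * z₁, d₂ * z₂)) / (z₁ * (u₁ - d₁)) * z₁ * (ξ.1.1 - ρ)
      = (f (u₁ * z₁, d₂ * z₂) - f (d₁ * z₁, d₂ * z₂)) * ((ξ.1.1 - d₁) / (u₁ - d₁) - q₁) := by
      simp only [q₁]; field_simp; ring
    have g2 : (f (d₁ * z₁, u₂ * z₂) - f (d₁ * z₁, d₂ * z₂)) / (z₂ * (u₂ - d₂)) * z₂ * (ξ.1.2 - ρ)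
      = (f (d₁ * z₁, u₂ * z₂) - f (d₁ * z₁, d₂ * z₂)) * ((ξ.1.2 - d₂) / (u₂ - d₂) - q₂) := by
      simp only [q₂]; field_simp; ring
    rw [g1, g2]
    have hA : (q₁ + q₂) * f (d₁ * z₁, d₂ * z₂) = f (d₁ * z₁, d₂ * z₂) := by
      rw [show q₁ + q₂ = 1 by linarith, one_mul]
    linarith
  · exact le_ciInf lower

lemma scale_convex {f : ℝ × ℝ → ℝ} (hf : GoodF f) {a b q : ℝ} (ha : 0 < a) (hb : 0 < b)
    (hq : 0 ≤ q) :
    ConvexOn ℝ (Set.Ioi (0 : ℝ) ×ˢ Set.Ioi (0 : ℝ)) (fun z => q * f (a * z.1, b * z.2)) := by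
  refine ⟨hf.1.1, ?_⟩
  rintro ⟨x1, x2⟩ ⟨hx1, hx2⟩ ⟨y1, y2⟩ ⟨hy1, hy2⟩ s t hs ht hst
  have := hf.cv (a * x1, b * x2) (a * y1, b * y2) ⟨mul_pos ha hx1, mul_pos hb hx2⟩
    ⟨mul_pos ha hy1, mul_pos hb hy2⟩ s t hs ht hst
  have h2 : s • ((a * x1, b * x2) : ℝ × ℝ) + t • ((a * y1, b * y2) : ℝ × ℝ)
      = (a * (s * x1 + t * y1), b * (s * x2 + t * y2)) := by
    ext <;> simp <;> ring
  rw [h2] at this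
  have := mul_le_mul_of_nonneg_left this hq
  simp only [smul_eq_mul, Prod.smul_mk, Prod.mk_add_mk] at this ⊢
  linarith

lemma Bop2_good (ρ d₁ d₂ u₁ u₂ : ℝ)
    (hd₁ : 0 < d₁) (hd₂ : 0 < d₂) (h₁ : d₁ < ρ) (h₂ : d₂ < ρ)
    (h₃ : ρ < u₁) (h₄ : ρ < u₂)
    (hκ : 1 - (ρ - d₁) / (u₁ - d₁) - (ρ - d₂) / (u₂ - d₂) = 0)
    (f : ℝ × ℝ → ℝ) (hf : GoodF f) : GoodF (Bop2 ρ d₁ d₂ u₁ u₂ f) := by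
  have key := Bop2_eq ρ d₁ d₂ u₁ u₂ hd₁ hd₂ h₁ h₂ h₃ h₄ hκ f hf
  have hu₁ : 0 < u₁ := by linarith
  have hu₂ : 0 < u₂ := by linarith
  have hq1 : 0 ≤ (ρ - d₁) / (u₁ - d₁) := div_nonneg (by linarith) (by linarith)
  have hq2 : 0 ≤ (ρ - d₂) / (u₂ - d₂) := div_nonneg (by linarith) (by linarith)
  constructor
  · refine ((scale_convex hf hu₁ hd₂ hq1).add (scale_convex hf hd₁ hu₂ hq2)).congr ?_
    rintro ⟨x, y⟩ ⟨hx, hy⟩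
    exact (key x y hx hy).symm
  · intro x₁ y₁ x₂ y₂ hx₁ hxy₁ hx₂ hxy₂
    have hy₁ : 0 < y₁ := by linarith
    have hy₂ : 0 < y₂ := by linarith
    rw [key _ _ hx₁ hx₂, key _ _ hx₁ hy₂, key _ _ hy₁ hx₂, key _ _ hy₁ hy₂]
    have k1 := mul_le_mul_of_nonneg_left (hf.2 (u₁ * x₁) (u₁ * y₁) (d₂ * x₂) (d₂ * y₂)
      (by positivity) (by gcongr) (by positivity) (by gcongr)) hq1
    have k2 := mul_le_mul_of_nonneg_left (hf.2 (d₁ * x₁) (d₁ * y₁) (u₂ * x₂) (u₂ * y₂)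
      (by positivity) (by gcongr) (by positivity) (by gcongr)) hq2
    linarith

lemma Bop2_iter (ρ d₁ d₂ u₁ u₂ : ℝ)
    (hd₁ : 0 < d₁) (hd₂ : 0 < d₂) (h₁ : d₁ < ρ) (h₂ : d₂ < ρ)
    (h₃ : ρ < u₁) (h₄ : ρ < u₂)
    (hκ : 1 - (ρ - d₁) / (u₁ - d₁) - (ρ - d₂) / (u₂ - d₂) = 0) (n : ℕ)
    (S₁ S₂ : ℝ) (hS₁ : 0 < S₁) (hS₂ : 0 < S₂) :
    ∀ f : ℝ × ℝ → ℝ, GoodF f → ((Bop2 ρ d₁ d₂ u₁ u₂)^[n] f) (S₁, S₂) =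
      ∑ k ∈ Finset.range (n + 1), (n.choose k : ℝ) *
        (((ρ - d₁) / (u₁ - d₁)) ^ k * ((ρ - d₂) / (u₂ - d₂)) ^ (n - k) *
        f (u₁ ^ k * d₁ ^ (n - k) * S₁, d₂ ^ k * u₂ ^ (n - k) * S₂)) := by
  have hu₁ : 0 < u₁ := by linarith
  have hu₂ : 0 < u₂ := by linarith
  induction n with
  | zero => intro f _; simp
  | succ n ih =>
    intro f hf
    rw [Function.iterate_succ_apply, ih _ (Bop2_good ρ d₁ d₂ u₁ u₂ hd₁ hd₂ h₁ h₂ h₃ h₄ hκ f hf)]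
    have hch := Finset.sum_choose_succ_mul (R := ℝ) (fun k m =>
      ((ρ - d₁) / (u₁ - d₁)) ^ k * ((ρ - d₂) / (u₂ - d₂)) ^ m *
        f (u₁ ^ k * d₁ ^ m * S₁, d₂ ^ k * u₂ ^ m * S₂)) n
    rw [hch, ← Finset.sum_add_distrib]
    refine Finset.sum_congr rfl fun k hk => ?_
    have hk' : n + 1 - k = (n - k) + 1 := by
      have := Finset.mem_range.1 hk
      omega
    rw [Bop2_eq ρ d₁ d₂ u₁ u₂ hd₁ hd₂ h₁ h₂ h₃ h₄ hκ f hf _ _ (by positivity) (by positivity), hk']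
    have a1 : u₁ * (u₁ ^ k * d₁ ^ (n - k) * S₁) = u₁ ^ (k + 1) * d₁ ^ (n - k) * S₁ := by ring
    have a2 : d₂ * (d₂ ^ k * u₂ ^ (n - k) * S₂) = d₂ ^ (k + 1) * u₂ ^ (n - k) * S₂ := by ring
    have a3 : d₁ * (u₁ ^ k * d₁ ^ (n - k) * S₁) = u₁ ^ k * d₁ ^ (n - k + 1) * S₁ := by ring
    have a4 : u₂ * (d₂ ^ k * u₂ ^ (n - k) * S₂) = d₂ ^ k * u₂ ^ (n - k + 1) * S₂ := by ring
    rw [a1, a2, a3, a4, pow_succ ((ρ - d₁) / (u₁ - d₁)) k, pow_succ ((ρ - d₂) / (u₂ - d₂)) (n - k)]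
    ring

theorem stmt17 (ρ d₁ d₂ u₁ u₂ : ℝ)
    (hd₁ : 0 < d₁) (hd₂ : 0 < d₂) (h₁ : d₁ < ρ) (h₂ : d₂ < ρ)
    (h₃ : ρ < u₁) (h₄ : ρ < u₂)
    (hκ : 1 - (ρ - d₁) / (u₁ - d₁) - (ρ - d₂) / (u₂ - d₂) = 0)
    (f : ℝ × ℝ → ℝ)
    (hconv : ConvexOn ℝ (Set.Ici (0 : ℝ) ×ˢ Set.Ici (0 : ℝ)) f)
    -- f is sub-modular
    (hsub : ∀ x₁ y₁ x₂ y₂ : ℝ, 0 ≤ x₁ → x₁ ≤ y₁ → 0 ≤ x₂ → x₂ ≤ y₂ →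
      f (x₁, x₂) + f (y₁, y₂) ≤ f (x₁, y₂) + f (y₁, x₂))
    (n : ℕ) (hn : 1 ≤ n) (S₁ S₂ : ℝ) (hS₁ : 0 < S₁) (hS₂ : 0 < S₂) :
    -- the n-step hedge price ρ^{-n} 𝓑^n f equals the two-color Cox-Ross-Rubinstein value
    ((Bop2 ρ d₁ d₂ u₁ u₂)^[n] f) (S₁, S₂) / ρ ^ n =
      (∑ k ∈ Finset.range (n + 1), (n.choose k : ℝ) *
        ((ρ - d₁) / (u₁ - d₁)) ^ k * ((ρ - d₂) / (u₂ - d₂)) ^ (n - k) *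
        f (u₁ ^ k * d₁ ^ (n - k) * S₁, d₂ ^ k * u₂ ^ (n - k) * S₂)) / ρ ^ n := by
  have hf : GoodF f := by
    refine ⟨hconv.subset ?_ ((convex_Ioi 0).prod (convex_Ioi 0)), ?_⟩
    · exact Set.prod_mono Set.Ioi_subset_Ici_self Set.Ioi_subset_Ici_self
    · intro x₁ y₁ x₂ y₂ a b c d
      exact hsub x₁ y₁ x₂ y₂ a.le b c.le d
  rw [Bop2_iter ρ d₁ d₂ u₁ u₂ hd₁ hd₂ h₁ h₂ h₃ h₄ hκ n S₁ S₂ hS₁ hS₂ f hf]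
  congr 1
  refine Finset.sum_congr rfl fun k _ => ?_
  ring
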